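/- arXiv:1309.1366 — 2 statements merged into one kernel-verified Lean document; each statement's English description precedes it below -/
import Mathlib

section
/- Let μ be a (K,d)-doubling Borel measure on a metric space (M,ρ) endowed with a Christ dyadic cube system with parameter δ ∈ (0,1) and with the level-j₀ subcube families. Let s ∈ ℝ, τ ∈ [0,∞), p ∈ (0,∞) and q ∈ (0,∞]. Then there exists a constant C ≥ 1 such that for every family a = {a_t^{j,ν}}_{j∈ℤ₊, t∈I_j, 1≤ν≤N_t^j} of complex numbers: ‖a‖_{b̃^{s+dτ−d/p}_{∞,∞}} ≤ C·‖a‖_{f̃^{s,τ}_{p,q}}. -/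
open MeasureTheory Metric
open scoped ENNReal

/-- A Christ dyadic cube system on a metric measure space `(M, ρ, μ)`. -/
structure ChristSystem (M : Type*) [MetricSpace M] [MeasurableSpace M] (μ : Measure M) where
  δ : ℝ
  δ_pos : 0 < δ
  δ_lt_one : δ < 1
  cSmall : ℝ
  cBig : ℝ
  cSmall_pos : 0 < cSmall
  cSmall_lt_cBig : cSmall < cBig
  I : ℤ → Type
  countable_I : ∀ j : ℤ, Countable (I j)
  Q : (j : ℤ) → I j → Set M
  center : (j : ℤ) → I j → M
  isOpen_Q : ∀ (j : ℤ) (α : I j), IsOpen (Q j α)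
  cover : ∀ j : ℤ, μ (Set.univ \ ⋃ α : I j, Q j α) = 0
  disjoint_Q : ∀ (j : ℤ) (α β : I j), α ≠ β → Q j α ∩ Q j β = ∅
  nested : ∀ (j ℓ : ℤ), j ≤ ℓ → ∀ (α : I j) (β : I ℓ), Q ℓ β ⊆ Q j α ∨ Q ℓ β ∩ Q j α = ∅
  parent : ∀ (j : ℤ) (α : I j) (ℓ : ℤ), ℓ < j → ∃! β : I ℓ, Q j α ⊆ Q ℓ β
  diam_le : ∀ (j : ℤ) (α : I j), EMetric.diam (Q j α) ≤ ENNReal.ofReal (cBig * δ ^ j)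
  ball_subset : ∀ (j : ℤ) (α : I j), ball (center j α) (cSmall * δ ^ j) ⊆ Q j α

/-- The `ℓ^q` norm (with `q ∈ (0,∞]`, usual modification when `q = ∞`) of a
sequence of extended nonnegative reals. -/
noncomputable def seqLq (q : ℝ≥0∞) (a : ℕ → ℝ≥0∞) : ℝ≥0∞ :=
  if q = ⊤ then ⨆ j, a j else (∑' j, a j ^ q.toReal) ^ (1 / q.toReal)

/-- The `L^p` quantity `(∫_A g^p dμ)^{1/p}` (ess sup over `A` when `p = ∞`) for a
nonnegative function `g`. -/
noncomputable def lpOn {M : Type*} [MetricSpace M] [MeasurableSpace M]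
    (μ : Measure M) (p : ℝ≥0∞) (A : Set M) (g : M → ℝ≥0∞) : ℝ≥0∞ :=
  if p = ⊤ then essSup g (μ.restrict A)
  else (∫⁻ x in A, g x ^ p.toReal ∂μ) ^ (1 / p.toReal)

/-- The `ℓ^q(L^p_τ)` norm of a sequence of nonnegative functions:
`sup_{k ∈ ℤ, α ∈ I_k} μ(Q_α^k)^{-τ} ( ∑_{j = max(k,0)}^∞ ( ∫_{Q_α^k} g_j^p dμ )^{q/p} )^{1/q}`. -/
noncomputable def bNorm {M : Type*} [MetricSpace M] [MeasurableSpace M] {μ : Measure M}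
    (S : ChristSystem M μ) (p q : ℝ≥0∞) (τ : ℝ) (g : ℕ → M → ℝ≥0∞) : ℝ≥0∞ :=
  ⨆ (k : ℤ) (α : S.I k), μ (S.Q k α) ^ (-τ) *
    seqLq q (fun j => if k.toNat ≤ j then lpOn μ p (S.Q k α) (g j) else 0)

/-- The `L^p_τ(ℓ^q)` norm of a sequence of nonnegative functions:
`sup_{k ∈ ℤ, α ∈ I_k} μ(Q_α^k)^{-τ} ( ∫_{Q_α^k} ( ∑_{j = max(k,0)}^∞ g_j^q )^{p/q} dμ )^{1/p}`. -/
noncomputable def fNorm {M : Type*} [MetricSpace M] [MeasurableSpace M] {μ : Measure M}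
    (S : ChristSystem M μ) (p q : ℝ≥0∞) (τ : ℝ) (g : ℕ → M → ℝ≥0∞) : ℝ≥0∞ :=
  ⨆ (k : ℤ) (α : S.I k), μ (S.Q k α) ^ (-τ) *
    lpOn μ p (S.Q k α) (fun x => seqLq q (fun j => if k.toNat ≤ j then g j x else 0))

/-- The index type of the level-`(j+j₀)` subcubes of the cube `Q_t^j`. -/
def SubIdx {M : Type*} [MetricSpace M] [MeasurableSpace M] {μ : Measure M}
    (S : ChristSystem M μ) (j₀ : ℕ) (j : ℕ) (t : S.I j) : Type :=
  {β : S.I ((j : ℤ) + j₀) // S.Q ((j : ℤ) + j₀) β ⊆ S.Q (j : ℤ) t}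

/-- The subcube `Q_t^{j,ν}`. -/
def SubQ {M : Type*} [MetricSpace M] [MeasurableSpace M] {μ : Measure M}
    (S : ChristSystem M μ) (j₀ : ℕ) (j : ℕ) (t : S.I j) (ν : SubIdx S j₀ j t) : Set M :=
  S.Q ((j : ℤ) + j₀) ν.1

/-- The level-`j` function `x ↦ ∑_{t ∈ I_j} ∑_{ν} w_t^{j,ν} |a_t^{j,ν}| χ_{E_t^{j,ν}}(x)`
associated with a coefficient family `a`, a weight family `w` and a family of sets `E`. -/
noncomputable def seqFunOn {M : Type*} [MetricSpace M] [MeasurableSpace M] {μ : Measure M}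
    (S : ChristSystem M μ) (j₀ : ℕ)
    (w : (j : ℕ) → (t : S.I j) → SubIdx S j₀ j t → ℝ≥0∞)
    (E : (j : ℕ) → (t : S.I j) → SubIdx S j₀ j t → Set M)
    (a : (j : ℕ) → (t : S.I j) → SubIdx S j₀ j t → ℂ) (j : ℕ) (x : M) : ℝ≥0∞ :=
  ∑' (t : S.I j) (ν : SubIdx S j₀ j t),
    w j t ν * (‖a j t ν‖₊ : ℝ≥0∞) * (E j t ν).indicator (fun _ => (1 : ℝ≥0∞)) x

/-- The level-`j` function `x ↦ ∑_{t ∈ I_j} ∑_{ν} w_t^{j,ν} |a_t^{j,ν}| χ_{Q_t^{j,ν}}(x)`. -/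
noncomputable def seqFun {M : Type*} [MetricSpace M] [MeasurableSpace M] {μ : Measure M}
    (S : ChristSystem M μ) (j₀ : ℕ)
    (w : (j : ℕ) → (t : S.I j) → SubIdx S j₀ j t → ℝ≥0∞)
    (a : (j : ℕ) → (t : S.I j) → SubIdx S j₀ j t → ℂ) (j : ℕ) (x : M) : ℝ≥0∞ :=
  seqFunOn S j₀ w (fun j t ν => SubQ S j₀ j t ν) a j x

/-- The weight `δ^{-js}` used for the sequence spaces `b^{s,τ}_{p,q}` and `f^{s,τ}_{p,q}`. -/
noncomputable def deltaWeight {M : Type*} [MetricSpace M] [MeasurableSpace M] {μ : Measure M}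
    (S : ChristSystem M μ) (j₀ : ℕ) (s : ℝ) :
    (j : ℕ) → (t : S.I j) → SubIdx S j₀ j t → ℝ≥0∞ :=
  fun j _ _ => ENNReal.ofReal (S.δ ^ (-(j : ℝ) * s))

/-- The weight `μ(Q_t^{j,ν})^{-s/d}` used for the sequence spaces `b̃^{s,τ}_{p,q}`
and `f̃^{s,τ}_{p,q}`. -/
noncomputable def tildeWeight {M : Type*} [MetricSpace M] [MeasurableSpace M] {μ : Measure M}
    (S : ChristSystem M μ) (j₀ : ℕ) (d s : ℝ) :
    (j : ℕ) → (t : S.I j) → SubIdx S j₀ j t → ℝ≥0∞ :=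
  fun j t ν => μ (SubQ S j₀ j t ν) ^ (-(s / d))

theorem aux_le_seqLq (q : ℝ≥0∞) (hq : 0 < q) (a : ℕ → ℝ≥0∞) (j : ℕ) : a j ≤ seqLq q a := by
  unfold seqLq
  split_ifs with h
  · exact le_iSup a j
  · have hq' : 0 < q.toReal := ENNReal.toReal_pos hq.ne' h
    calc a j = (a j ^ q.toReal) ^ (1 / q.toReal) := by
          rw [← ENNReal.rpow_mul, mul_one_div_cancel hq'.ne', ENNReal.rpow_one]
      _ ≤ _ := ENNReal.rpow_le_rpow (ENNReal.le_tsum j) (by positivity)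

theorem aux_seqFun_ge {M : Type*} [MetricSpace M] [MeasurableSpace M] {μ : Measure M}
    (S : ChristSystem M μ) (j₀ : ℕ)
    (w : (j : ℕ) → (t : S.I j) → SubIdx S j₀ j t → ℝ≥0∞)
    (a : (j : ℕ) → (t : S.I j) → SubIdx S j₀ j t → ℂ) (j : ℕ) (x : M)
    (t : S.I j) (ν : SubIdx S j₀ j t) (hx : x ∈ SubQ S j₀ j t ν) :
    w j t ν * (‖a j t ν‖₊ : ℝ≥0∞) ≤ seqFun S j₀ w a j x := by
  unfold seqFun seqFunOn
  refine le_trans ?_ (ENNReal.le_tsum t)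
  refine le_trans ?_ (ENNReal.le_tsum ν)
  simp [hx]

theorem aux_seqFun_le {M : Type*} [MetricSpace M] [MeasurableSpace M] {μ : Measure M}
    (S : ChristSystem M μ) (j₀ : ℕ)
    (w : (j : ℕ) → (t : S.I j) → SubIdx S j₀ j t → ℝ≥0∞)
    (a : (j : ℕ) → (t : S.I j) → SubIdx S j₀ j t → ℂ) (j : ℕ) (x : M) (B : ℝ≥0∞)
    (hB : ∀ (t : S.I j) (ν : SubIdx S j₀ j t), x ∈ SubQ S j₀ j t ν →
      w j t ν * (‖a j t ν‖₊ : ℝ≥0∞) ≤ B) :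
    seqFun S j₀ w a j x ≤ B := by
  unfold seqFun seqFunOn
  by_cases h : ∃ (t : S.I j) (ν : SubIdx S j₀ j t), x ∈ SubQ S j₀ j t ν
  · obtain ⟨t, ν, hx⟩ := h
    rw [tsum_eq_single t, tsum_eq_single ν]
    · simpa [hx] using hB t ν hx
    · intro κ hne
      have : x ∉ SubQ S j₀ j t κ := by
        intro hy
        have h1 : κ.1 ≠ ν.1 := fun h => hne (Subtype.ext h)
        have h2 := S.disjoint_Q _ _ _ h1
        exact Set.disjoint_left.1 (Set.disjoint_iff_inter_eq_empty.2 h2) hy hx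
      simp [this]
    · intro t' hne
      have : ∀ κ, x ∉ SubQ S j₀ j t' κ := by
        intro κ hy
        have h2 := S.disjoint_Q _ _ _ hne
        exact Set.disjoint_left.1 (Set.disjoint_iff_inter_eq_empty.2 h2) (κ.2 hy) (ν.2 hx)
      simp [this]
  · push Not at h
    simp [h]

theorem stmt_15 {M : Type*} [MetricSpace M] [MeasurableSpace M] [BorelSpace M]
    (μ : Measure M)
    (hball : ∀ (x : M) (r : ℝ), 0 < r → 0 < μ (ball x r) ∧ μ (ball x r) < ⊤)
    (K d : ℝ) (hK : 1 < K) (hd : d = Real.logb 2 K)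
    (hdoub : ∀ (x : M) (r lam : ℝ), 0 < r → 1 ≤ lam →
      μ (ball x (lam * r)) ≤ ENNReal.ofReal (K * lam ^ d) * μ (ball x r))
    (S : ChristSystem M μ) (j₀ : ℕ)
    (hfin : ∀ (j : ℕ) (t : S.I j), Finite (SubIdx S j₀ j t))
    (s τ : ℝ) (hτ : 0 ≤ τ)
    (p q : ℝ≥0∞) (hp0 : 0 < p) (hpt : p ≠ ⊤) (hq : 0 < q) :
    ∃ C : ℝ, 1 ≤ C ∧
      ∀ a : (j : ℕ) → (t : S.I j) → SubIdx S j₀ j t → ℂ,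
        (⨆ (j : ℕ) (x : M),
            seqFun S j₀ (tildeWeight S j₀ d (s + d * τ - d / p.toReal)) a j x)
          ≤ ENNReal.ofReal C * fNorm S p q τ (seqFun S j₀ (tildeWeight S j₀ d s) a) := by
  have hd0 : 0 < d := by rw [hd]; exact Real.logb_pos (by norm_num) hK
  have hp' : 0 < p.toReal := ENNReal.toReal_pos hp0.ne' hpt
  have hδ := S.δ_pos
  have hδ1 := S.δ_lt_one
  have hc := S.cSmall_pos
  have hcC := S.cSmall_lt_cBig
  have hδj : S.δ ^ j₀ ≤ 1 := pow_le_one₀ hδ.le hδ1.le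
  obtain ⟨L, hL⟩ : ∃ L : ℝ, L = 2 * S.cBig / (S.cSmall * S.δ ^ j₀) := ⟨_, rfl⟩
  have hden : 0 < S.cSmall * S.δ ^ j₀ := by positivity
  have hL1 : 1 ≤ L := by
    rw [hL, le_div_iff₀ hden]
    nlinarith
  obtain ⟨D, hD⟩ : ∃ D : ℝ, D = K * L ^ d := ⟨_, rfl⟩
  have hD1 : 1 ≤ D := by
    rw [hD]
    nlinarith [Real.one_le_rpow hL1 hd0.le]
  refine ⟨D ^ τ, Real.one_le_rpow hD1 hτ, fun a => ?_⟩
  refine iSup₂_le fun j x => aux_seqFun_le _ _ _ _ _ _ _ fun t ν hx => ?_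
  obtain ⟨P, hP⟩ : ∃ P, P = SubQ S j₀ j t ν := ⟨_, rfl⟩
  have hPo : IsOpen P := by rw [hP]; exact S.isOpen_Q _ _
  have hPQ : P ⊆ S.Q j t := by rw [hP]; exact ν.2
  have hr : 0 < S.cSmall * S.δ ^ ((j : ℤ) + j₀) := by positivity
  have hbP : ball (S.center _ ν.1) (S.cSmall * S.δ ^ ((j : ℤ) + j₀)) ⊆ P := by
    rw [hP]; exact S.ball_subset _ _
  have hPpos : 0 < μ P := (hball _ _ hr).1.trans_le (measure_mono hbP)
  have hLr : L * (S.cSmall * S.δ ^ ((j : ℤ) + j₀)) = 2 * S.cBig * S.δ ^ (j : ℤ) := by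
    rw [hL, zpow_add₀ hδ.ne', zpow_natCast, zpow_natCast]
    field_simp
  have hQb : S.Q j t ⊆ ball (S.center _ ν.1) (L * (S.cSmall * S.δ ^ ((j : ℤ) + j₀))) := by
    intro y hy
    rw [hLr, mem_ball]
    have hz : S.center _ ν.1 ∈ S.Q j t := hPQ (hbP (mem_ball_self hr))
    have h1 : edist y (S.center _ ν.1) ≤ ENNReal.ofReal (S.cBig * S.δ ^ (j : ℤ)) :=
      (EMetric.edist_le_diam_of_mem hy hz).trans (S.diam_le _ _)
    have hpos : 0 < S.cBig * S.δ ^ (j : ℤ) := mul_pos (hc.trans hcC) (by positivity)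
    rw [edist_dist, ENNReal.ofReal_le_ofReal_iff hpos.le] at h1
    linarith
  have hQP : μ (S.Q j t) ≤ ENNReal.ofReal D * μ P := by
    rw [hD]
    exact (measure_mono hQb).trans ((hdoub _ _ _ hr hL1).trans (by gcongr))
  have hQfin : μ (S.Q j t) < ⊤ :=
    (measure_mono hQb).trans_lt (hball _ _ (by positivity)).2
  have hPfin : μ P < ⊤ := (measure_mono hPQ).trans_lt hQfin
  have hQpos : 0 < μ (S.Q j t) := hPpos.trans_le (measure_mono hPQ)
  have hlow : μ (S.Q j t) ^ (-τ) * (μ P ^ (-(s / d)) * (‖a j t ν‖₊ : ℝ≥0∞) * μ P ^ (1 / p.toReal))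
      ≤ fNorm S p q τ (seqFun S j₀ (tildeWeight S j₀ d s) a) := by
    unfold fNorm
    refine le_trans ?_ (le_iSup₂ (j : ℤ) t)
    gcongr
    unfold lpOn
    rw [if_neg hpt]
    calc μ P ^ (-(s / d)) * (‖a j t ν‖₊ : ℝ≥0∞) * μ P ^ (1 / p.toReal)
        = (∫⁻ _ in P, (μ P ^ (-(s / d)) * (‖a j t ν‖₊ : ℝ≥0∞)) ^ p.toReal ∂μ)
            ^ (1 / p.toReal) := by
          rw [setLIntegral_const, ENNReal.mul_rpow_of_nonneg _ _ (by positivity),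
            ← ENNReal.rpow_mul, mul_one_div_cancel hp'.ne', ENNReal.rpow_one]
      _ ≤ _ := by
          refine ENNReal.rpow_le_rpow ?_ (by positivity)
          refine le_trans ?_ (lintegral_mono_set hPQ)
          refine setLIntegral_mono' hPo.measurableSet fun y hy => ?_
          refine ENNReal.rpow_le_rpow ?_ hp'.le
          refine le_trans ?_ (aux_le_seqLq q hq _ j)
          rw [if_pos (by simp)]
          rw [hP] at hy
          have := aux_seqFun_ge S j₀ (tildeWeight S j₀ d s) a j y t ν hy
          rw [hP]
          exact this
  refine le_trans ?_ (mul_le_mul_right hlow _)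
  have hτP : μ P ^ (-τ) ≤ ENNReal.ofReal (D ^ τ) * μ (S.Q j t) ^ (-τ) := by
    have h1 : μ (S.Q j t) ^ τ ≤ ENNReal.ofReal (D ^ τ) * μ P ^ τ := by
      rw [← ENNReal.ofReal_rpow_of_nonneg (by linarith) hτ, ← ENNReal.mul_rpow_of_nonneg _ _ hτ]
      exact ENNReal.rpow_le_rpow hQP hτ
    calc μ P ^ (-τ) = μ P ^ (-τ) * (μ (S.Q j t) ^ τ * μ (S.Q j t) ^ (-τ)) := by
          rw [← ENNReal.rpow_add _ _ hQpos.ne' hQfin.ne]; simp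
      _ ≤ μ P ^ (-τ) * ((ENNReal.ofReal (D ^ τ) * μ P ^ τ) * μ (S.Q j t) ^ (-τ)) := by gcongr
      _ = ENNReal.ofReal (D ^ τ) * μ (S.Q j t) ^ (-τ) * (μ P ^ (-τ) * μ P ^ τ) := by ring
      _ = _ := by rw [← ENNReal.rpow_add _ _ hPpos.ne' hPfin.ne]; simp
  have hw : tildeWeight S j₀ d (s + d * τ - d / p.toReal) j t ν
      = μ P ^ (-(s / d)) * μ P ^ (1 / p.toReal) * μ P ^ (-τ) := by
    unfold tildeWeight
    rw [← hP, ← ENNReal.rpow_add _ _ hPpos.ne' hPfin.ne, ← ENNReal.rpow_add _ _ hPpos.ne' hPfin.ne]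
    congr 1
    field_simp
    ring
  rw [hw]
  calc μ P ^ (-(s / d)) * μ P ^ (1 / p.toReal) * μ P ^ (-τ) * (‖a j t ν‖₊ : ℝ≥0∞)
      ≤ μ P ^ (-(s / d)) * μ P ^ (1 / p.toReal) *
        (ENNReal.ofReal (D ^ τ) * μ (S.Q j t) ^ (-τ)) * (‖a j t ν‖₊ : ℝ≥0∞) := by gcongr
    _ = _ := by ring
end

section
/- Let μ be a (K,d)-doubling Borel measure on a metric space (M,ρ) endowed with a Christ dyadic cube system with parameter δ ∈ (0,1) and with the level-j₀ subcube families. Let s ∈ ℝ and q ∈ (0,∞]. For a family a = {a_t^{j,ν}} of complex numbers and for k ∈ ℤ₊, α ∈ I_k, 1 ≤ u ≤ N_α^k, define G̃^{s,q}_{k,α,u}(a)(x) := ( ∑_{j=k}^∞ ( ∑_{t∈I_j}∑_{ν=1}^{N_t^j} μ(Q_t^{j,ν})^{−s/d}|a_t^{j,ν}|χ_{Q_t^{j,ν}}(x)χ_{Q_α^{k,u}}(x) )^q )^{1/q} (usual modification when q = ∞), m̃^{s,q}_{k,α,u}(a) := inf{ λ > 0 : μ({x ∈ Q_α^{k,u}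 : G̃^{s,q}_{k,α,u}(a)(x) > λ}) < μ(Q_α^{k,u})/4 }, and m̃^{s,q}(a)(x) := sup_{k∈ℤ₊, α∈I_k, 1≤u≤N_α^k} m̃^{s,q}_{k,α,u}(a)·χ_{Q_α^{k,u}}(x). Then there exists a constant C ≥ 1 such that for every such family a: C^{−1}·‖a‖_{f̃^{s,1/q}_{q,q}} ≤ ‖m̃^{s,q}(a)‖_{L^∞(M)} ≤ C·‖a‖_{f̃^{s,1/q}_{q,q}}. The same holds with μ(Q_t^{j,ν})^{−s/d} replaced throughout by δ^{−js} and f̃^{s,1/q}_{q,q} replaced by f^{s,1/q}_{q,q}. -/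
open MeasureTheory Metric
open scoped ENNReal

/-- The truncated square-type function
`G^{s,q}_{k,α,u}(a)(x) = ( ∑_{j=k}^∞ ( (∑_{t,ν} w |a| χ_{Q_t^{j,ν}})(x) χ_{Q_α^{k,u}}(x) )^q )^{1/q}`. -/
noncomputable def Gfun {M : Type*} [MetricSpace M] [MeasurableSpace M] {μ : Measure M}
    (S : ChristSystem M μ) (j₀ : ℕ)
    (w : (j : ℕ) → (t : S.I j) → SubIdx S j₀ j t → ℝ≥0∞)
    (a : (j : ℕ) → (t : S.I j) → SubIdx S j₀ j t → ℂ) (q : ℝ≥0∞)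
    (k : ℕ) (α : S.I k) (u : SubIdx S j₀ k α) (x : M) : ℝ≥0∞ :=
  seqLq q (fun j => if k ≤ j then
    seqFun S j₀ w a j x * (SubQ S j₀ k α u).indicator (fun _ => (1 : ℝ≥0∞)) x else 0)

/-- The median-type quantity
`m^{s,q}_{k,α,u}(a) = inf{ λ > 0 : μ({x ∈ Q_α^{k,u} : G^{s,q}_{k,α,u}(a)(x) > λ}) < μ(Q_α^{k,u})/4 }`. -/
noncomputable def mQuant {M : Type*} [MetricSpace M] [MeasurableSpace M] {μ : Measure M}
    (S : ChristSystem M μ) (j₀ : ℕ)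
    (w : (j : ℕ) → (t : S.I j) → SubIdx S j₀ j t → ℝ≥0∞)
    (a : (j : ℕ) → (t : S.I j) → SubIdx S j₀ j t → ℂ) (q : ℝ≥0∞)
    (k : ℕ) (α : S.I k) (u : SubIdx S j₀ k α) : ℝ≥0∞ :=
  sInf {lam : ℝ≥0∞ | 0 < lam ∧
    μ {x ∈ SubQ S j₀ k α u | lam < Gfun S j₀ w a q k α u x} < μ (SubQ S j₀ k α u) / 4}

/-- The maximal median function
`m^{s,q}(a)(x) = sup_{k ∈ ℤ₊, α ∈ I_k, 1 ≤ u ≤ N_α^k} m^{s,q}_{k,α,u}(a) χ_{Q_α^{k,u}}(x)`. -/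
noncomputable def mMax {M : Type*} [MetricSpace M] [MeasurableSpace M] {μ : Measure M}
    (S : ChristSystem M μ) (j₀ : ℕ)
    (w : (j : ℕ) → (t : S.I j) → SubIdx S j₀ j t → ℝ≥0∞)
    (a : (j : ℕ) → (t : S.I j) → SubIdx S j₀ j t → ℂ) (q : ℝ≥0∞) (x : M) : ℝ≥0∞ :=
  ⨆ (k : ℕ) (α : S.I k) (u : SubIdx S j₀ k α),
    mQuant S j₀ w a q k α u * (SubQ S j₀ k α u).indicator (fun _ => (1 : ℝ≥0∞)) x

section Helpers

variable {M : Type*} [MetricSpace M] [MeasurableSpace M] [BorelSpace M] {μ : Measure M}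

theorem aux_pos (hball : ∀ (x : M) (r : ℝ), 0 < r → 0 < μ (ball x r) ∧ μ (ball x r) < ⊤)
    (S : ChristSystem M μ) (j : ℤ) (α : S.I j) : 0 < μ (S.Q j α) :=
  lt_of_lt_of_le (hball _ _ (mul_pos S.cSmall_pos (zpow_pos S.δ_pos j))).1
    (measure_mono (S.ball_subset j α))

theorem aux_mem (S : ChristSystem M μ) (j : ℤ) (α : S.I j) : S.center j α ∈ S.Q j α :=
  S.ball_subset j α (mem_ball_self (mul_pos S.cSmall_pos (zpow_pos S.δ_pos j)))

theorem aux_sub (S : ChristSystem M μ) (j : ℤ) (α : S.I j) (z : M) (hz : z ∈ S.Q j α) :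
    S.Q j α ⊆ ball z (2 * S.cBig * S.δ ^ j) := by
  intro x hx
  have hB : 0 < S.cBig * S.δ ^ j :=
    mul_pos (S.cSmall_pos.trans S.cSmall_lt_cBig) (zpow_pos S.δ_pos j)
  have h1 : edist x z ≤ ENNReal.ofReal (S.cBig * S.δ ^ j) :=
    (Metric.edist_le_ediam_of_mem hx hz).trans (S.diam_le j α)
  rw [edist_dist, ENNReal.ofReal_le_ofReal_iff hB.le] at h1
  rw [mem_ball]
  linarith

theorem aux_fin (hball : ∀ (x : M) (r : ℝ), 0 < r → 0 < μ (ball x r) ∧ μ (ball x r) < ⊤)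
    (S : ChristSystem M μ) (j : ℤ) (α : S.I j) : μ (S.Q j α) ≠ ⊤ := by
  have hB : 0 < 2 * S.cBig * S.δ ^ j :=
    mul_pos (mul_pos two_pos (S.cSmall_pos.trans S.cSmall_lt_cBig)) (zpow_pos S.δ_pos j)
  exact ((measure_mono (aux_sub S j α _ (aux_mem S j α))).trans_lt (hball _ _ hB).2).ne

theorem aux_doub (K d : ℝ)
    (hdoub : ∀ (x : M) (r lam : ℝ), 0 < r → 1 ≤ lam →
      μ (ball x (lam * r)) ≤ ENNReal.ofReal (K * lam ^ d) * μ (ball x r))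
    (S : ChristSystem M μ) (j₀ : ℕ) (k : ℕ) (α : S.I k) (u : SubIdx S j₀ k α) :
    μ (S.Q k α) ≤ ENNReal.ofReal (K * (2 * S.cBig / (S.cSmall * S.δ ^ j₀)) ^ d) *
      μ (SubQ S j₀ k α u) := by
  have hc := S.cSmall_pos
  have hb := S.cSmall_lt_cBig
  have hδ := S.δ_pos
  have hδj : 0 < S.δ ^ j₀ := pow_pos hδ _
  have hδ1 : S.δ ^ j₀ ≤ 1 := pow_le_one₀ hδ.le S.δ_lt_one.le
  have hz := aux_mem S _ u.1
  have h1 := aux_sub S k α _ (u.2 hz)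
  have hr : 0 < S.cSmall * S.δ ^ ((k : ℤ) + j₀) := mul_pos hc (zpow_pos hδ _)
  have hl : 1 ≤ 2 * S.cBig / (S.cSmall * S.δ ^ j₀) := by
    rw [le_div_iff₀ (by positivity)]
    nlinarith
  have h2 := hdoub (S.center _ u.1) _ _ hr hl
  have h3 : 2 * S.cBig / (S.cSmall * S.δ ^ j₀) * (S.cSmall * S.δ ^ ((k : ℤ) + j₀))
      = 2 * S.cBig * S.δ ^ (k : ℤ) := by
    rw [zpow_add₀ hδ.ne', zpow_natCast _ j₀]
    field_simp
  rw [h3] at h2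
  exact (measure_mono h1).trans (h2.trans (mul_le_mul_right (measure_mono (S.ball_subset _ u.1)) _))

theorem aux_mem_unique (S : ChristSystem M μ) (j₀ j : ℕ) (x : M)
    (i i' : Σ t : S.I j, SubIdx S j₀ j t)
    (h : x ∈ SubQ S j₀ j i.1 i.2) (h' : x ∈ SubQ S j₀ j i'.1 i'.2) : i = i' := by
  obtain ⟨t, β, hβ⟩ := i
  obtain ⟨t', β', hβ'⟩ := i'
  simp only [SubQ] at h h'
  have e1 : t = t' := by
    by_contra hne
    have := S.disjoint_Q _ _ _ hne
    exact (this ▸ (⟨hβ h, hβ' h'⟩ : x ∈ S.Q j t ∩ S.Q j t') : x ∈ (∅ : Set M))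
  have e2 : β = β' := by
    by_contra hne
    have := S.disjoint_Q _ _ _ hne
    exact (this ▸ (⟨h, h'⟩ : x ∈ S.Q _ β ∩ S.Q _ β') : x ∈ (∅ : Set M))
  subst e1; subst e2; rfl

variable (S : ChristSystem M μ) (j₀ : ℕ)
  (w : (j : ℕ) → (t : S.I j) → SubIdx S j₀ j t → ℝ≥0∞)
  (a : (j : ℕ) → (t : S.I j) → SubIdx S j₀ j t → ℂ)

theorem aux_countable (j : ℕ) : Countable (Σ t : S.I j, SubIdx S j₀ j t) := by
  have := S.countable_I
  have : ∀ t : S.I j, Countable (SubIdx S j₀ j t) := fun t => by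
    unfold SubIdx; infer_instance
  infer_instance

theorem aux_seqFun (j : ℕ) (x : M) : seqFun S j₀ w a j x =
    ∑' i : (Σ t : S.I j, SubIdx S j₀ j t), (w j i.1 i.2 * (‖a j i.1 i.2‖₊ : ℝ≥0∞)) *
      (SubQ S j₀ j i.1 i.2).indicator (fun _ => (1 : ℝ≥0∞)) x := by
  unfold seqFun seqFunOn
  rw [ENNReal.tsum_sigma']

theorem aux_measP (j : ℕ) (t : S.I j) (u : SubIdx S j₀ j t) : MeasurableSet (SubQ S j₀ j t u) :=
  (S.isOpen_Q _ _).measurableSet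

theorem aux_seqFun_meas (j : ℕ) : Measurable (seqFun S j₀ w a j) := by
  have := aux_countable S j₀ j
  have h : seqFun S j₀ w a j = fun x => _ := funext (aux_seqFun S j₀ w a j)
  rw [h]
  refine Measurable.tsum fun i => ?_
  exact (measurable_const.indicator (aux_measP S j₀ j _ _)).const_mul _

/-- value of the level function on a subcube -/
theorem aux_seqFun_on (j : ℕ) (x : M) (i : Σ t : S.I j, SubIdx S j₀ j t)
    (hx : x ∈ SubQ S j₀ j i.1 i.2) :
    seqFun S j₀ w a j x = w j i.1 i.2 * (‖a j i.1 i.2‖₊ : ℝ≥0∞) := by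
  rw [aux_seqFun, tsum_eq_single i]
  · simp [hx]
  · intro i' hi'
    have : x ∉ SubQ S j₀ j i'.1 i'.2 := fun h => hi' (aux_mem_unique S j₀ j x _ _ h hx)
    simp [this]

theorem aux_seqFun_off (j : ℕ) (x : M)
    (hx : ∀ i : (Σ t : S.I j, SubIdx S j₀ j t), x ∉ SubQ S j₀ j i.1 i.2) :
    seqFun S j₀ w a j x = 0 := by
  rw [aux_seqFun]
  simp [hx]

/-- the tail function -/
noncomputable def auxT (q : ℝ≥0∞) (g : ℕ → M → ℝ≥0∞) (k : ℕ) (x : M) : ℝ≥0∞ :=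
  seqLq q (fun j => if k ≤ j then g j x else 0)

theorem auxT_meas (q : ℝ≥0∞) (g : ℕ → M → ℝ≥0∞) (hg : ∀ j, Measurable (g j)) (k : ℕ) :
    Measurable (auxT q g k) := by
  unfold auxT seqLq
  have h : ∀ j, Measurable (fun x => if k ≤ j then g j x else 0) := fun j => by
    split_ifs
    · exact hg j
    · exact measurable_const
  split_ifs
  · exact Measurable.iSup h
  · exact (Measurable.tsum fun j => (h j).pow_const _).pow_const _

theorem auxT_pow (q : ℝ≥0∞) (hq : 0 < q) (hq' : q ≠ ⊤) (g : ℕ → M → ℝ≥0∞) (k : ℕ) (x : M) :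
    auxT q g k x ^ q.toReal = ∑' j, if k ≤ j then g j x ^ q.toReal else 0 := by
  have hr : 0 < q.toReal := ENNReal.toReal_pos hq.ne' hq'
  unfold auxT seqLq
  rw [if_neg hq', one_div, ENNReal.rpow_inv_rpow hr.ne']
  refine tsum_congr fun j => ?_
  by_cases h : k ≤ j
  · simp [h]
  · simp [h, hr]

theorem aux_Gfun (q : ℝ≥0∞) (k : ℕ) (α : S.I k) (u : SubIdx S j₀ k α) (x : M)
    (hx : x ∈ SubQ S j₀ k α u) :
    Gfun S j₀ w a q k α u x = auxT q (seqFun S j₀ w a) k x := by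
  simp [Gfun, auxT, hx]

theorem aux_set (q : ℝ≥0∞) (k : ℕ) (α : S.I k) (u : SubIdx S j₀ k α) (lam : ℝ≥0∞) :
    {x ∈ SubQ S j₀ k α u | lam < Gfun S j₀ w a q k α u x} =
    {x ∈ SubQ S j₀ k α u | lam < auxT q (seqFun S j₀ w a) k x} := by
  ext x
  simp only [Set.mem_ofPred_eq]
  constructor
  · rintro ⟨h, h'⟩; exact ⟨h, by rwa [aux_Gfun S j₀ w a q k α u x h] at h'⟩
  · rintro ⟨h, h'⟩; exact ⟨h, by rwa [aux_Gfun S j₀ w a q k α u x h]⟩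

theorem aux_mQuant_le (hball : ∀ (x : M) (r : ℝ), 0 < r → 0 < μ (ball x r) ∧ μ (ball x r) < ⊤)
    (q : ℝ≥0∞) (k : ℕ) (α : S.I k) (u : SubIdx S j₀ k α) :
    mQuant S j₀ w a q k α u ≤ essSup (mMax S j₀ w a q) μ := by
  have hae := ENNReal.ae_le_essSup (μ := μ) (mMax S j₀ w a q)
  have hpos : μ (SubQ S j₀ k α u) ≠ 0 := (aux_pos hball S _ u.1).ne'
  have hex : ∃ x ∈ SubQ S j₀ k α u, mMax S j₀ w a q x ≤ essSup (mMax S j₀ w a q) μ := by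
    by_contra hcon
    push Not at hcon
    apply hpos
    refine measure_mono_null (fun x hx => ?_) (ae_iff.1 hae)
    exact not_le.2 (hcon x hx)
  obtain ⟨x, hx, hle⟩ := hex
  refine le_trans ?_ hle
  unfold mMax
  refine le_trans ?_ (le_iSup_of_le k (le_iSup_of_le α (le_iSup_of_le u le_rfl)))
  simp [hx]

theorem aux_median (q : ℝ≥0∞) (k : ℕ) (α : S.I k) (u : SubIdx S j₀ k α) :
    μ {x ∈ SubQ S j₀ k α u | mQuant S j₀ w a q k α u < auxT q (seqFun S j₀ w a) k x}
      ≤ μ (SubQ S j₀ k α u) / 4 := by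
  set m := mQuant S j₀ w a q k α u with hm
  rcases eq_or_ne m ⊤ with htop | htop
  · simp [htop]
  obtain ⟨v, hva, hvm, hvt⟩ := exists_seq_strictAnti_tendsto' (lt_top_iff_ne_top.2 htop)
  have hsub : {x ∈ SubQ S j₀ k α u | m < auxT q (seqFun S j₀ w a) k x} =
      ⋃ n, {x ∈ SubQ S j₀ k α u | v n < auxT q (seqFun S j₀ w a) k x} := by
    ext x
    simp only [Set.mem_ofPred_eq, Set.mem_iUnion]
    constructor
    · rintro ⟨h, h'⟩
      obtain ⟨n, hn⟩ := (hvt.eventually_lt_const h').exists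
      exact ⟨n, h, hn⟩
    · rintro ⟨n, h, h'⟩
      exact ⟨h, (hvm n).1.trans h'⟩
  rw [hsub, Monotone.measure_iUnion]
  · refine iSup_le fun n => ?_
    have : sInf {lam : ℝ≥0∞ | 0 < lam ∧
        μ {x ∈ SubQ S j₀ k α u | lam < Gfun S j₀ w a q k α u x} < μ (SubQ S j₀ k α u) / 4} < v n :=
      (hvm n).1
    obtain ⟨lam, ⟨_, hl⟩, hlv⟩ := sInf_lt_iff.1 this
    rw [aux_set] at hl
    refine le_trans (measure_mono ?_) hl.le
    rintro x ⟨h, h'⟩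
    exact ⟨h, hlv.trans h'⟩
  · intro n n' hnn x hx
    exact ⟨hx.1, (hva.antitone hnn).trans_lt hx.2⟩

/-- upper bound, `q = ∞` -/
theorem aux_upper_top
    (hball : ∀ (x : M) (r : ℝ), 0 < r → 0 < μ (ball x r) ∧ μ (ball x r) < ⊤) :
    essSup (mMax S j₀ w a ⊤) μ ≤ fNorm S ⊤ ⊤ ((⊤ : ℝ≥0∞)⁻¹).toReal (seqFun S j₀ w a) := by
  set F := fNorm S ⊤ ⊤ ((⊤ : ℝ≥0∞)⁻¹).toReal (seqFun S j₀ w a) with hF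
  refine essSup_le_of_ae_le _ (Filter.Eventually.of_forall fun x => ?_)
  refine iSup_le fun k => iSup_le fun α => iSup_le fun u => ?_
  refine le_trans (mul_le_of_le_one_right' (Set.indicator_le_self' (by simp) x)) ?_
  have hP0 : 0 < μ (SubQ S j₀ k α u) := aux_pos hball S _ u.1
  refine le_of_forall_gt fun lam hlam => ?_
  obtain ⟨l', hl1, hl2⟩ := exists_between hlam
  refine lt_of_le_of_lt (sInf_le ⟨bot_le.trans_lt hl1, ?_⟩) hl2
  rw [aux_set]
  have h1 : essSup (auxT ⊤ (seqFun S j₀ w a) k) (μ.restrict (S.Q k α)) ≤ F := by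
    rw [hF]
    unfold fNorm lpOn
    refine le_trans ?_ (le_iSup_of_le (k : ℤ) (le_iSup_of_le α le_rfl))
    simp only [ENNReal.inv_top, ENNReal.toReal_zero, neg_zero, ENNReal.rpow_zero, one_mul,
      if_true]
    exact le_rfl
  have h2 : μ {x ∈ SubQ S j₀ k α u | l' < auxT ⊤ (seqFun S j₀ w a) k x} = 0 := by
    have hae := ENNReal.ae_le_essSup (μ := μ.restrict (S.Q k α)) (auxT ⊤ (seqFun S j₀ w a) k)
    rw [ae_restrict_iff' (S.isOpen_Q _ _).measurableSet] at hae
    refine measure_mono_null ?_ (ae_iff.1 hae)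
    rintro y ⟨hy, hy'⟩ hcon
    exact absurd ((hcon (u.2 hy)).trans h1) (not_le.2 (hl1.trans hy'))
  rw [h2]
  exact ENNReal.div_pos hP0.ne' (by simp)

/-- lower bound, `q = ∞` -/
theorem aux_lower_top
    (hball : ∀ (x : M) (r : ℝ), 0 < r → 0 < μ (ball x r) ∧ μ (ball x r) < ⊤) :
    fNorm S ⊤ ⊤ ((⊤ : ℝ≥0∞)⁻¹).toReal (seqFun S j₀ w a) ≤ essSup (mMax S j₀ w a ⊤) μ := by
  set L := essSup (mMax S j₀ w a ⊤) μ with hL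
  have key : ∀ j x, seqFun S j₀ w a j x ≤ L := by
    intro j x
    by_cases hx : ∃ i : (Σ t : S.I j, SubIdx S j₀ j t), x ∈ SubQ S j₀ j i.1 i.2
    · obtain ⟨i, hi⟩ := hx
      refine le_trans ?_ (aux_mQuant_le S j₀ w a hball ⊤ j i.1 i.2)
      refine le_sInf ?_
      rintro lam ⟨_, hl⟩
      by_contra hcon
      push Not at hcon
      rw [aux_set] at hl
      have hs : {y ∈ SubQ S j₀ j i.1 i.2 | lam < auxT ⊤ (seqFun S j₀ w a) j y} =
          SubQ S j₀ j i.1 i.2 := by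
        ext y
        simp only [Set.mem_ofPred_eq, and_iff_left_iff_imp]
        intro hy
        refine hcon.trans_le ?_
        rw [aux_seqFun_on S j₀ w a j x i hi, ← aux_seqFun_on S j₀ w a j y i hy]
        unfold auxT seqLq
        rw [if_pos rfl]
        refine le_iSup_of_le j ?_
        simp
      rw [hs] at hl
      exact absurd hl (not_lt.2 (ENNReal.div_le_of_le_mul (le_mul_of_one_le_right' (by norm_num))))
    · push Not at hx
      rw [aux_seqFun_off S j₀ w a j x hx]
      exact bot_le
  unfold fNorm
  refine iSup_le fun k => iSup_le fun α => ?_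
  simp only [ENNReal.inv_top, ENNReal.toReal_zero, neg_zero, ENNReal.rpow_zero, one_mul, lpOn,
    if_true]
  refine essSup_le_of_ae_le _ (Filter.Eventually.of_forall fun x => ?_)
  simp only [seqLq, if_true]
  refine iSup_le fun j => ?_
  split_ifs
  · exact key j x
  · exact bot_le

/-- upper bound, `q < ∞` -/
theorem aux_upper (hball : ∀ (x : M) (r : ℝ), 0 < r → 0 < μ (ball x r) ∧ μ (ball x r) < ⊤)
    (D A : ℝ≥0∞)
    (hD : ∀ (k : ℕ) (α : S.I k) (u : SubIdx S j₀ k α), μ (S.Q k α) ≤ D * μ (SubQ S j₀ k α u))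
    (q : ℝ≥0∞) (hq : 0 < q) (hq' : q ≠ ⊤) (hA : 4 * D ≤ A ^ q.toReal) :
    essSup (mMax S j₀ w a q) μ ≤ A * fNorm S q q (q⁻¹).toReal (seqFun S j₀ w a) := by
  have hr : 0 < q.toReal := ENNReal.toReal_pos hq.ne' hq'
  set F := fNorm S q q (q⁻¹).toReal (seqFun S j₀ w a) with hF
  refine essSup_le_of_ae_le _ (Filter.Eventually.of_forall fun x => ?_)
  refine iSup_le fun k => iSup_le fun α => iSup_le fun u => ?_
  refine le_trans (mul_le_of_le_one_right' (Set.indicator_le_self' (by simp) x)) ?_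
  have hP0 : μ (SubQ S j₀ k α u) ≠ 0 := (aux_pos hball S _ u.1).ne'
  have hPt : μ (SubQ S j₀ k α u) ≠ ⊤ := aux_fin hball S _ u.1
  have hQ0 : μ (S.Q k α) ≠ 0 := (aux_pos hball S _ α).ne'
  have hQt : μ (S.Q k α) ≠ ⊤ := aux_fin hball S _ α
  have hTm := auxT_meas q _ (aux_seqFun_meas S j₀ w a) k
  -- the integral bound
  have h1 : ∫⁻ y in S.Q k α, auxT q (seqFun S j₀ w a) k y ^ q.toReal ∂μ
      ≤ F ^ q.toReal * μ (S.Q k α) := by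
    have h2 : μ (S.Q k α) ^ (-(q⁻¹).toReal) *
        (∫⁻ y in S.Q k α, auxT q (seqFun S j₀ w a) k y ^ q.toReal ∂μ) ^ (1 / q.toReal) ≤ F := by
      rw [hF]
      unfold fNorm lpOn
      refine le_trans ?_ (le_iSup_of_le (k : ℤ) (le_iSup_of_le α le_rfl))
      simp [auxT, hq']
    have h3 := ENNReal.rpow_le_rpow h2 hr.le
    rw [ENNReal.mul_rpow_of_nonneg _ _ hr.le, one_div, ENNReal.rpow_inv_rpow hr.ne',
      ← ENNReal.rpow_mul, ENNReal.toReal_inv, neg_mul, inv_mul_cancel₀ hr.ne',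
      ENNReal.rpow_neg_one] at h3
    calc _ = ((μ (S.Q k α))⁻¹ *
          ∫⁻ y in S.Q k α, auxT q (seqFun S j₀ w a) k y ^ q.toReal ∂μ) * μ (S.Q k α) := by
            rw [mul_right_comm, ENNReal.inv_mul_cancel hQ0 hQt, one_mul]
      _ ≤ _ := mul_le_mul_left h3 _
  refine le_of_forall_gt fun lam hlam => ?_
  obtain ⟨l', hl1, hl2⟩ := exists_between hlam
  refine lt_of_le_of_lt (sInf_le ⟨bot_le.trans_lt hl1, ?_⟩) hl2
  rw [aux_set]
  by_contra hcon
  push Not at hcon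
  have hch : l' ^ q.toReal * μ {x ∈ SubQ S j₀ k α u | l' < auxT q (seqFun S j₀ w a) k x} ≤
      F ^ q.toReal * μ (S.Q k α) := by
    refine le_trans ?_ h1
    have h4 := mul_meas_ge_le_lintegral (μ := μ.restrict (S.Q k α))
      (hTm.pow_const q.toReal) (l' ^ q.toReal)
    refine le_trans (mul_le_mul_right ?_ _) h4
    rw [Measure.restrict_apply' (S.isOpen_Q _ _).measurableSet]
    refine measure_mono ?_
    rintro y ⟨hy, hy'⟩
    exact ⟨ENNReal.rpow_le_rpow hy'.le hr.le, u.2 hy⟩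
  have h5 : l' ^ q.toReal * μ (SubQ S j₀ k α u) ≤ (A * F) ^ q.toReal * μ (SubQ S j₀ k α u) := by
    calc l' ^ q.toReal * μ (SubQ S j₀ k α u)
        = 4 * (l' ^ q.toReal * (μ (SubQ S j₀ k α u) / 4)) := by
          rw [mul_left_comm, ENNReal.mul_div_cancel (by norm_num) (by norm_num)]
      _ ≤ 4 * (F ^ q.toReal * (D * μ (SubQ S j₀ k α u))) := by
          refine mul_le_mul_right ?_ _
          exact (mul_le_mul_right hcon _).trans (hch.trans (mul_le_mul_right (hD k α u) _))
      _ = (4 * D) * F ^ q.toReal * μ (SubQ S j₀ k α u) := by ring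
      _ ≤ A ^ q.toReal * F ^ q.toReal * μ (SubQ S j₀ k α u) := by gcongr
      _ = _ := by rw [ENNReal.mul_rpow_of_nonneg _ _ hr.le]
  rw [ENNReal.mul_le_mul_iff_left hP0 hPt] at h5
  exact absurd h5 (not_le.2 (ENNReal.rpow_lt_rpow hl1 hr))

/-- lower bound, `q < ∞` -/
theorem aux_lower (hball : ∀ (x : M) (r : ℝ), 0 < r → 0 < μ (ball x r) ∧ μ (ball x r) < ⊤)
    (A : ℝ≥0∞)
    (q : ℝ≥0∞) (hq : 0 < q) (hq' : q ≠ ⊤) (hA : 2 ≤ A ^ q.toReal) :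
    fNorm S q q (q⁻¹).toReal (seqFun S j₀ w a) ≤ A * essSup (mMax S j₀ w a q) μ := by
  have hr : 0 < q.toReal := ENNReal.toReal_pos hq.ne' hq'
  set L := essSup (mMax S j₀ w a q) μ with hL
  set g := seqFun S j₀ w a with hg
  have hgm : ∀ j, Measurable (g j) := aux_seqFun_meas S j₀ w a
  unfold fNorm
  refine iSup_le fun k => iSup_le fun α => ?_
  have hQ0 : μ (S.Q k α) ≠ 0 := (aux_pos hball S _ α).ne'
  have hQt : μ (S.Q k α) ≠ ⊤ := aux_fin hball S _ α
  have hQm : MeasurableSet (S.Q k α) := (S.isOpen_Q _ _).measurableSet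
  set κ := k.toNat with hκ
  -- good sets
  let E : (j : ℕ) → Set M := fun j => ⋃ i : (Σ t : S.I j, SubIdx S j₀ j t),
    {x ∈ SubQ S j₀ j i.1 i.2 | auxT q g j x ≤ mQuant S j₀ w a q j i.1 i.2}
  have hEim : ∀ (j : ℕ) (i : (Σ t : S.I j, SubIdx S j₀ j t)), MeasurableSet
      {x ∈ SubQ S j₀ j i.1 i.2 | auxT q g j x ≤ mQuant S j₀ w a q j i.1 i.2} := fun j i =>
    (aux_measP S j₀ j i.1 i.2).inter (measurableSet_le (auxT_meas q g hgm j) measurable_const)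
  have hEm : ∀ j, MeasurableSet (E j) := fun j => by
    have := aux_countable S j₀ j
    exact MeasurableSet.iUnion (hEim j)
  -- measure of good parts
  have hEi : ∀ (j : ℕ) (i : (Σ t : S.I j, SubIdx S j₀ j t)), μ (SubQ S j₀ j i.1 i.2) ≤
      2 * μ {x ∈ SubQ S j₀ j i.1 i.2 | auxT q g j x ≤ mQuant S j₀ w a q j i.1 i.2} := by
    intro j i
    have hPt : μ (SubQ S j₀ j i.1 i.2) ≠ ⊤ := aux_fin hball S _ i.2.1
    have h1 := aux_median S j₀ w a q j i.1 i.2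
    have h2 : μ (SubQ S j₀ j i.1 i.2) ≤
        μ {x ∈ SubQ S j₀ j i.1 i.2 | auxT q g j x ≤ mQuant S j₀ w a q j i.1 i.2} +
        μ {x ∈ SubQ S j₀ j i.1 i.2 | mQuant S j₀ w a q j i.1 i.2 < auxT q g j x} := by
      refine le_trans (measure_mono ?_) (measure_union_le _ _)
      intro x hx
      rcases le_or_gt (auxT q g j x) (mQuant S j₀ w a q j i.1 i.2) with h | h
      · exact Or.inl ⟨hx, h⟩
      · exact Or.inr ⟨hx, h⟩
    have hEt : μ {x ∈ SubQ S j₀ j i.1 i.2 | auxT q g j x ≤ mQuant S j₀ w a q j i.1 i.2} ≠ ⊤ :=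
      ((measure_mono (fun x hx => hx.1)).trans_lt (lt_top_iff_ne_top.2 hPt)).ne
    have h3 := h2.trans (add_le_add_right h1 _)
    generalize μ {x ∈ SubQ S j₀ j i.1 i.2 | auxT q g j x ≤ mQuant S j₀ w a q j i.1 i.2} = e
      at h3 hEt ⊢
    generalize μ (SubQ S j₀ j i.1 i.2) = p at h3 hPt ⊢
    lift e to NNReal using hEt
    lift p to NNReal using hPt
    have h4 : (p : ℝ≥0∞) / 4 = ((p / 4 : NNReal) : ℝ≥0∞) := by
      rw [ENNReal.coe_div (by norm_num)]; rfl
    rw [h4] at h3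
    have h5 : p ≤ e + p / 4 := by exact_mod_cast h3
    have h6 : p ≤ 2 * e := by
      rw [← NNReal.coe_le_coe] at h5 ⊢
      push_cast at h5 ⊢
      have := p.2
      have := e.2
      linarith [NNReal.coe_nonneg p, NNReal.coe_nonneg e]
    exact_mod_cast h6
  -- level estimate
  have hlev : ∀ j, κ ≤ j → ∫⁻ x in S.Q k α, g j x ^ q.toReal ∂μ ≤
      2 * ∫⁻ x in S.Q k α, (E j).indicator (fun x => g j x ^ q.toReal) x ∂μ := by
    intro j hj
    have hcnt := aux_countable S j₀ j
    have hkj : k ≤ (j : ℤ) + j₀ := by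
      have := Int.self_le_toNat k
      have : (κ : ℤ) ≤ j := by exact_mod_cast hj
      omega
    set c : (Σ t : S.I j, SubIdx S j₀ j t) → ℝ≥0∞ :=
      fun i => (w j i.1 i.2 * (‖a j i.1 i.2‖₊ : ℝ≥0∞)) ^ q.toReal with hc
    have hL1 : ∀ x, g j x ^ q.toReal ≤ ∑' i : (Σ t : S.I j, SubIdx S j₀ j t),
        c i * (SubQ S j₀ j i.1 i.2).indicator (fun _ => (1 : ℝ≥0∞)) x := by
      intro x
      by_cases hx : ∃ i : (Σ t : S.I j, SubIdx S j₀ j t), x ∈ SubQ S j₀ j i.1 i.2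
      · obtain ⟨i, hi⟩ := hx
        refine le_trans ?_ (ENNReal.le_tsum i)
        rw [hg, aux_seqFun_on S j₀ w a j x i hi]
        simp [hi, hc]
      · push Not at hx
        rw [hg, aux_seqFun_off S j₀ w a j x hx, ENNReal.zero_rpow_of_pos hr]
        exact bot_le
    have hR1 : ∀ x, ∑' i : (Σ t : S.I j, SubIdx S j₀ j t), c i *
        {x ∈ SubQ S j₀ j i.1 i.2 | auxT q g j x ≤ mQuant S j₀ w a q j i.1 i.2}.indicator
          (fun _ => (1 : ℝ≥0∞)) x ≤ (E j).indicator (fun x => g j x ^ q.toReal) x := by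
      intro x
      by_cases hx : x ∈ E j
      · obtain ⟨i, hi⟩ := Set.mem_iUnion.1 hx
        rw [tsum_eq_single i]
        · rw [Set.indicator_of_mem hi, Set.indicator_of_mem hx, mul_one, hg,
            aux_seqFun_on S j₀ w a j x i hi.1]
        · intro i' hi'
          rw [Set.indicator_of_notMem, mul_zero]
          intro h
          exact hi' (aux_mem_unique S j₀ j x _ _ h.1 hi.1)
      · have : ∀ i : (Σ t : S.I j, SubIdx S j₀ j t), x ∉
            {x ∈ SubQ S j₀ j i.1 i.2 | auxT q g j x ≤ mQuant S j₀ w a q j i.1 i.2} :=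
          fun i hi => hx (Set.mem_iUnion.2 ⟨i, hi⟩)
        refine le_of_eq_of_le ?_ bot_le
        rw [ENNReal.bot_eq_zero, ENNReal.tsum_eq_zero]
        intro i
        rw [Set.indicator_of_notMem (this i), mul_zero]
    calc ∫⁻ x in S.Q k α, g j x ^ q.toReal ∂μ
        ≤ ∫⁻ x in S.Q k α, ∑' i : (Σ t : S.I j, SubIdx S j₀ j t),
          c i * (SubQ S j₀ j i.1 i.2).indicator (fun _ => (1 : ℝ≥0∞)) x ∂μ := lintegral_mono hL1
      _ = ∑' i : (Σ t : S.I j, SubIdx S j₀ j t), c i * μ (SubQ S j₀ j i.1 i.2 ∩ S.Q k α) := by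
          rw [lintegral_tsum fun i =>
            ((measurable_const.indicator (aux_measP S j₀ j _ _)).const_mul _).aemeasurable]
          refine tsum_congr fun i => ?_
          rw [lintegral_const_mul _ (measurable_const.indicator (aux_measP S j₀ j _ _)),
            lintegral_indicator_const (aux_measP S j₀ j _ _), one_mul,
            Measure.restrict_apply' hQm]
      _ ≤ ∑' i : (Σ t : S.I j, SubIdx S j₀ j t), 2 * (c i * μ ({x ∈ SubQ S j₀ j i.1 i.2 |
            auxT q g j x ≤ mQuant S j₀ w a q j i.1 i.2} ∩ S.Q k α)) := by
          refine ENNReal.tsum_le_tsum fun i => ?_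
          rw [mul_left_comm]
          refine mul_le_mul_right ?_ _
          rcases S.nested k _ hkj α i.2.1 with h | h
          · have h' : SubQ S j₀ j i.1 i.2 ⊆ S.Q k α := h
            rw [Set.inter_eq_left.2 h', Set.inter_eq_left.2 (fun x hx => h hx.1)]
            exact hEi j i
          · have : SubQ S j₀ j i.1 i.2 ∩ S.Q k α = ∅ := h
            rw [this, measure_empty]
            exact bot_le
      _ = 2 * ∫⁻ x in S.Q k α, ∑' i : (Σ t : S.I j, SubIdx S j₀ j t), c i *
          {x ∈ SubQ S j₀ j i.1 i.2 | auxT q g j x ≤ mQuant S j₀ w a q j i.1 i.2}.indicator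
          (fun _ => (1 : ℝ≥0∞)) x ∂μ := by
          rw [ENNReal.tsum_mul_left, lintegral_tsum fun i =>
            ((measurable_const.indicator (hEim j i)).const_mul _).aemeasurable]
          congr 1
          refine tsum_congr fun i => ?_
          rw [lintegral_const_mul _ (measurable_const.indicator (hEim j i)),
            lintegral_indicator_const (hEim j i), one_mul,
            Measure.restrict_apply' hQm]
      _ ≤ _ := mul_le_mul_right (lintegral_mono hR1) _
  -- pointwise estimate
  have hpt : ∀ x, (∑' j, if κ ≤ j then (E j).indicator (fun x => g j x ^ q.toReal) x else 0) ≤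
      L ^ q.toReal := by
    intro x
    by_cases hx : ∃ j, κ ≤ j ∧ x ∈ E j
    · classical
      obtain ⟨hj1, hj2⟩ := Nat.find_spec hx
      have hmin := fun j => Nat.find_min (H := hx) (m := j)
      set n := Nat.find hx
      obtain ⟨i, hi⟩ := Set.mem_iUnion.1 hj2
      calc (∑' j, if κ ≤ j then (E j).indicator (fun x => g j x ^ q.toReal) x else 0)
          ≤ ∑' j, if n ≤ j then g j x ^ q.toReal else 0 := by
            refine ENNReal.tsum_le_tsum fun j => ?_
            by_cases h1 : κ ≤ j
            · rw [if_pos h1]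
              by_cases h2 : x ∈ E j
              · have h3 : n ≤ j := by
                  by_contra h3
                  exact hmin j (not_le.1 h3) ⟨h1, h2⟩
                rw [if_pos h3, Set.indicator_of_mem h2]
              · rw [Set.indicator_of_notMem h2]
                exact bot_le
            · rw [if_neg h1]
              exact bot_le
        _ = auxT q g n x ^ q.toReal := (auxT_pow q hq hq' g n x).symm
        _ ≤ L ^ q.toReal := ENNReal.rpow_le_rpow
            (hi.2.trans (aux_mQuant_le S j₀ w a hball q n i.1 i.2)) hr.le
    · push Not at hx
      refine le_of_eq_of_le ?_ bot_le
      rw [ENNReal.bot_eq_zero, ENNReal.tsum_eq_zero]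
      intro j
      split_ifs with h
      · exact Set.indicator_of_notMem (hx j h) _
      · rfl
  have hite : ∀ (f : ℕ → M → ℝ≥0∞), (∀ j, Measurable (f j)) →
      ∫⁻ x in S.Q k α, (∑' j, if κ ≤ j then f j x else 0) ∂μ =
      ∑' j, if κ ≤ j then ∫⁻ x in S.Q k α, f j x ∂μ else 0 := by
    intro f hf
    rw [lintegral_tsum]
    · refine tsum_congr fun j => ?_
      split_ifs
      · rfl
      · simp
    · intro j
      split_ifs
      · exact (hf j).aemeasurable
      · exact aemeasurable_const
  have hint : ∫⁻ x in S.Q k α, auxT q g κ x ^ q.toReal ∂μ ≤ 2 * (L ^ q.toReal * μ (S.Q k α)) := by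
    calc ∫⁻ x in S.Q k α, auxT q g κ x ^ q.toReal ∂μ
        = ∑' j, if κ ≤ j then ∫⁻ x in S.Q k α, g j x ^ q.toReal ∂μ else 0 := by
          rw [← hite _ fun j => (hgm j).pow_const _]
          simp only [auxT_pow q hq hq']
      _ ≤ ∑' j, 2 * (if κ ≤ j then
          ∫⁻ x in S.Q k α, (E j).indicator (fun x => g j x ^ q.toReal) x ∂μ else 0) := by
          refine ENNReal.tsum_le_tsum fun j => ?_
          split_ifs with h
          · exact hlev j h
          · exact bot_le
      _ = 2 * ∫⁻ x in S.Q k α, (∑' j, if κ ≤ j then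
            (E j).indicator (fun x => g j x ^ q.toReal) x else 0) ∂μ := by
          rw [ENNReal.tsum_mul_left, hite _ fun j => ((hgm j).pow_const _).indicator (hEm j)]
      _ ≤ 2 * ∫⁻ x in S.Q k α, L ^ q.toReal ∂μ := mul_le_mul_right (lintegral_mono hpt) _
      _ = _ := by rw [setLIntegral_const]
  have hlp : lpOn μ q (S.Q k α) (fun x => seqLq q (fun j => if κ ≤ j then g j x else 0)) =
      (∫⁻ x in S.Q k α, auxT q g κ x ^ q.toReal ∂μ) ^ (1 / q.toReal) := by
    unfold lpOn
    rw [if_neg hq']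
    rfl
  rw [hlp, ← ENNReal.rpow_le_rpow_iff hr, ENNReal.mul_rpow_of_nonneg _ _ hr.le, one_div,
    ENNReal.rpow_inv_rpow hr.ne',
      ← ENNReal.rpow_mul, ENNReal.toReal_inv, neg_mul, inv_mul_cancel₀ hr.ne',
      ENNReal.rpow_neg_one, ENNReal.mul_rpow_of_nonneg _ _ hr.le]
  calc (μ (S.Q k α))⁻¹ * ∫⁻ x in S.Q k α, auxT q g κ x ^ q.toReal ∂μ
      ≤ (μ (S.Q k α))⁻¹ * (2 * (L ^ q.toReal * μ (S.Q k α))) := mul_le_mul_right hint _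
    _ = 2 * L ^ q.toReal * ((μ (S.Q k α))⁻¹ * μ (S.Q k α)) := by ring
    _ = 2 * L ^ q.toReal := by rw [ENNReal.inv_mul_cancel hQ0 hQt, mul_one]
    _ ≤ _ := by gcongr

end Helpers

theorem stmt_17 {M : Type*} [MetricSpace M] [MeasurableSpace M] [BorelSpace M]
    (μ : Measure M)
    (hball : ∀ (x : M) (r : ℝ), 0 < r → 0 < μ (ball x r) ∧ μ (ball x r) < ⊤)
    (K d : ℝ) (hK : 1 < K) (hd : d = Real.logb 2 K)
    (hdoub : ∀ (x : M) (r lam : ℝ), 0 < r → 1 ≤ lam →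
      μ (ball x (lam * r)) ≤ ENNReal.ofReal (K * lam ^ d) * μ (ball x r))
    (S : ChristSystem M μ) (j₀ : ℕ)
    (hfin : ∀ (j : ℕ) (t : S.I j), Finite (SubIdx S j₀ j t))
    (s : ℝ) (q : ℝ≥0∞) (hq : 0 < q) :
    ∃ C : ℝ, 1 ≤ C ∧
      ∀ a : (j : ℕ) → (t : S.I j) → SubIdx S j₀ j t → ℂ,
        (fNorm S q q (q⁻¹).toReal (seqFun S j₀ (tildeWeight S j₀ d s) a) ≤
            ENNReal.ofReal C * essSup (mMax S j₀ (tildeWeight S j₀ d s) a q) μ) ∧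
        (essSup (mMax S j₀ (tildeWeight S j₀ d s) a q) μ ≤
            ENNReal.ofReal C * fNorm S q q (q⁻¹).toReal (seqFun S j₀ (tildeWeight S j₀ d s) a)) ∧
        (fNorm S q q (q⁻¹).toReal (seqFun S j₀ (deltaWeight S j₀ s) a) ≤
            ENNReal.ofReal C * essSup (mMax S j₀ (deltaWeight S j₀ s) a q) μ) ∧
        (essSup (mMax S j₀ (deltaWeight S j₀ s) a q) μ ≤
            ENNReal.ofReal C * fNorm S q q (q⁻¹).toReal (seqFun S j₀ (deltaWeight S j₀ s) a)) := by
  rcases eq_or_ne q ⊤ with rfl | hq'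
  · refine ⟨1, le_rfl, fun a => ?_⟩
    simp only [ENNReal.ofReal_one, one_mul]
    exact ⟨aux_lower_top S j₀ _ a hball, aux_upper_top S j₀ _ a hball,
      aux_lower_top S j₀ _ a hball, aux_upper_top S j₀ _ a hball⟩
  · have hr : 0 < q.toReal := ENNReal.toReal_pos hq.ne' hq'
    set D : ℝ := K * (2 * S.cBig / (S.cSmall * S.δ ^ j₀)) ^ d with hDdef
    have hD0 : 0 ≤ D := by
      have := S.cSmall_pos
      have := S.cSmall_pos.trans S.cSmall_lt_cBig
      have := S.δ_pos
      have : 0 < K := by linarith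
      positivity
    have hD := aux_doub K d hdoub S j₀
    have hCr : ENNReal.ofReal ((4 * D + 2) ^ (1 / q.toReal)) ^ q.toReal =
        ENNReal.ofReal (4 * D + 2) := by
      rw [ENNReal.ofReal_rpow_of_nonneg (by positivity) hr.le, one_div,
        Real.rpow_inv_rpow (by positivity) hr.ne']
    have h4 : 4 * ENNReal.ofReal D ≤
        ENNReal.ofReal ((4 * D + 2) ^ (1 / q.toReal)) ^ q.toReal := by
      rw [hCr]
      have : (4 : ℝ≥0∞) = ENNReal.ofReal 4 := by norm_num
      rw [this, ← ENNReal.ofReal_mul (by norm_num)]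
      exact ENNReal.ofReal_le_ofReal (by linarith)
    have h2 : 2 ≤ ENNReal.ofReal ((4 * D + 2) ^ (1 / q.toReal)) ^ q.toReal := by
      rw [hCr]
      have : (2 : ℝ≥0∞) = ENNReal.ofReal 2 := by norm_num
      rw [this]
      exact ENNReal.ofReal_le_ofReal (by linarith)
    refine ⟨(4 * D + 2) ^ (1 / q.toReal),
      Real.one_le_rpow (by linarith) (by positivity), fun a => ?_⟩
    exact ⟨aux_lower S j₀ _ a hball _ q hq hq' h2, aux_upper S j₀ _ a hball _ _ hD q hq hq' h4,
      aux_lower S j₀ _ a hball _ q hq hq' h2, aux_upper S j₀ _ a hball _ _ hD q hq hq' h4⟩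
end
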